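/- Let A be any nonempty proper subset of the set of all states. Then the maximum of φ(S) − r(S,T) over all admissible transitions (S,T) with S ∈ A and T ∉ A is equal to the maximum of φ(S) − r(S,T) over the subcollection of such admissible transitions for which additionally ||T| − |S|| = 1 (i.e., T is a parent or a child of S); moreover this subcollection is nonempty. -/

import Mathlib

/-- The potential function φ(S) = G(S) - Σ_{b∈S} γ_b. -/
noncomputable def phi {B : ℕ} (G : Finset (Fin B) → ℝ) (γ : Fin B → ℝ)
    (S : Finset (Fin B)) : ℝ :=
  G S - ∑ b ∈ S, γ b

/-- An ordered pair (S,T) of states is an admissible transition if it is upward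
(S ⊊ T) or downward (T = S \ {b₀} for some b₀ ∈ S). -/
def Adm {B : ℕ} (S T : Finset (Fin B)) : Prop :=
  S ⊂ T ∨ ∃ b₀ ∈ S, T = S.erase b₀

/-- Resistance of an admissible transition. -/
noncomputable def res {B : ℕ} (G : Finset (Fin B) → ℝ) (γ : Fin B → ℝ)
    (S T : Finset (Fin B)) : ℝ :=
  if S ⊂ T then ∑ b ∈ T \ S, γ b else G S - G T

/-!
Along an upward transition `φ(S) - r(S,T) = G(S) - ∑_{b ∈ T} γ_b`, which increases with `S` and
decreases with `T`. An upward crossing of the boundary of `A` contains a crossing of a single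
covering pair `S ⊆ S' ⋖ T' ⊆ T`, whose value is therefore at least as large; downward transitions
already are covering pairs. Covering crossings exist because, for `S ∈ A` and `T ∉ A`, the union
`S ∪ T` is separated by `A` from one of `S` and `T`.
-/

section Order

variable {α : Type*} {A : Set α} {a b : α}

theorem exists_covBy_mem_notMem_of_le [PartialOrder α] [LocallyFiniteOrder α]
    (hab : a ≤ b) (ha : a ∈ A) (hb : b ∉ A) :
    ∃ c ∈ A, ∃ d ∉ A, a ≤ c ∧ c ⋖ d ∧ d ≤ b := by
  induction le_iff_reflTransGen_covBy.1 hab using Relation.ReflTransGen.head_induction_on with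
  | refl => exact absurd ha hb
  | @head a x hax hxb ih =>
    have hxb : x ≤ b := le_iff_reflTransGen_covBy.2 hxb
    by_cases hx : x ∈ A
    · obtain ⟨c, hc, d, hd, hxc, hcd, hdb⟩ := ih hxb hx
      exact ⟨c, hc, d, hd, hax.le.trans hxc, hcd, hdb⟩
    · exact ⟨a, ha, x, hx, le_rfl, hax, hxb⟩

theorem exists_covBy_or_covBy_mem_notMem [SemilatticeSup α] [LocallyFiniteOrder α]
    (ha : a ∈ A) (hb : b ∉ A) : ∃ c ∈ A, ∃ d ∉ A, c ⋖ d ∨ d ⋖ c := by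
  by_cases hab : a ⊔ b ∈ A
  · obtain ⟨d, hd, c, hc, -, hdc, -⟩ :=
      exists_covBy_mem_notMem_of_le (A := Aᶜ) le_sup_right hb (not_not_intro hab)
    exact ⟨c, not_not.1 hc, d, hd, .inr hdc⟩
  · obtain ⟨c, hc, d, hd, -, hcd, -⟩ := exists_covBy_mem_notMem_of_le le_sup_left ha hab
    exact ⟨c, hc, d, hd, .inl hcd⟩

end Order

section Transitions

variable {B : ℕ} {G : Finset (Fin B) → ℝ} {γ : Fin B → ℝ} {S S' T T' : Finset (Fin B)}

theorem adm_iff_ssubset_or_covBy : Adm S T ↔ S ⊂ T ∨ T ⋖ S := by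
  simp only [Adm, Finset.covBy_iff_exists_erase, eq_comm]

theorem adm_and_card_eq_add_one_iff :
    Adm S T ∧ (T.card = S.card + 1 ∨ S.card = T.card + 1) ↔ S ⋖ T ∨ T ⋖ S := by
  have card_of_covBy {U V : Finset (Fin B)} (h : U ⋖ V) : V.card = U.card + 1 :=
    (Nat.covBy_iff_add_one_eq.1 h.card_finset).symm
  rw [adm_iff_ssubset_or_covBy]
  constructor
  · rintro ⟨hST | hTS, hcard⟩
    · have hcard : T.card = S.card + 1 :=
        hcard.resolve_right fun h => by have := Finset.card_lt_card hST; omega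
      exact .inl <| (covBy_iff_lt_covBy_grade (𝕆 := ℕ)).2
        ⟨hST, Nat.covBy_iff_add_one_eq.2 hcard.symm⟩
    · exact .inr hTS
  · rintro (hST | hTS)
    · exact ⟨.inl hST.lt, .inl (card_of_covBy hST)⟩
    · exact ⟨.inr hTS, .inr (card_of_covBy hTS)⟩

theorem phi_sub_res_of_ssubset (hST : S ⊂ T) :
    phi G γ S - res G γ S T = G S - ∑ b ∈ T, γ b := by
  rw [phi, res, if_pos hST, sub_sub, add_comm, Finset.sum_sdiff hST.subset]

theorem phi_sub_res_le_of_subset (hG : Monotone G) (hγ : ∀ b, 0 ≤ γ b)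
    (hSS' : S ⊆ S') (hST' : S' ⊂ T') (hTT' : T' ⊆ T) :
    phi G γ S - res G γ S T ≤ phi G γ S' - res G γ S' T' := by
  rw [phi_sub_res_of_ssubset (hSS'.trans_ssubset (hST'.trans_subset hTT')),
    phi_sub_res_of_ssubset hST']
  exact sub_le_sub (hG hSS') (Finset.sum_mono_set_of_nonneg hγ hTT')

theorem exists_covBy_phi_sub_res_le (hG : Monotone G) (hγ : ∀ b, 0 ≤ γ b)
    {A : Set (Finset (Fin B))} (hS : S ∈ A) (hT : T ∉ A) (hadm : Adm S T) :
    ∃ S' ∈ A, ∃ T' ∉ A, (S' ⋖ T' ∨ T' ⋖ S') ∧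
      phi G γ S - res G γ S T ≤ phi G γ S' - res G γ S' T' := by
  rcases adm_iff_ssubset_or_covBy.1 hadm with hST | hTS
  · obtain ⟨S', hS', T', hT', hSS', hcov, hTT'⟩ :=
      exists_covBy_mem_notMem_of_le hST.subset hS hT
    exact ⟨S', hS', T', hT', .inl hcov, phi_sub_res_le_of_subset hG hγ hSS' hcov.lt hTT'⟩
  · exact ⟨S, hS, T, hT, .inr hTS, le_rfl⟩

end Transitions

/-- Reduction of the modified balance system (10) to system (17): for every nonempty
proper set A of states, the max of φ(S) - r(S,T) over admissible crossing pairs equals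
the max over the (nonempty) subcollection of crossing pairs that are parent–child pairs. -/
theorem stmt1 {B : ℕ} (G : Finset (Fin B) → ℝ) (γ : Fin B → ℝ)
    (hG0 : G ∅ = 0)
    (hGmono : ∀ S T : Finset (Fin B), S ⊆ T → G S ≤ G T)
    (hγ : ∀ b, 0 < γ b)
    (A : Set (Finset (Fin B))) (hA : A.Nonempty) (hA' : A ≠ Set.univ) :
    (∃ S ∈ A, ∃ T ∉ A, Adm S T ∧ (T.card = S.card + 1 ∨ S.card = T.card + 1)) ∧
    sSup {x : ℝ | ∃ S ∈ A, ∃ T ∉ A, Adm S T ∧ x = phi G γ S - res G γ S T} =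
      sSup {x : ℝ | ∃ S ∈ A, ∃ T ∉ A, Adm S T ∧
        (T.card = S.card + 1 ∨ S.card = T.card + 1) ∧ x = phi G γ S - res G γ S T} := by
  constructor
  · obtain ⟨S₀, hS₀⟩ := hA
    obtain ⟨T₀, hT₀⟩ := (Set.ne_univ_iff_exists_notMem A).1 hA'
    obtain ⟨S, hS, T, hT, hcov⟩ := exists_covBy_or_covBy_mem_notMem hS₀ hT₀
    exact ⟨S, hS, T, hT, adm_and_card_eq_add_one_iff.2 hcov⟩
  · apply csSup_eq_csSup_of_forall_exists_le
    · rintro _ ⟨S, hS, T, hT, hadm, rfl⟩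
      obtain ⟨S', hS', T', hT', hcov, hle⟩ :=
        exists_covBy_phi_sub_res_le hGmono (fun b => (hγ b).le) hS hT hadm
      obtain ⟨hadm', hcard⟩ := adm_and_card_eq_add_one_iff.2 hcov
      exact ⟨_, ⟨S', hS', T', hT', hadm', hcard, rfl⟩, hle⟩
    · rintro x ⟨S, hS, T, hT, hadm, -, hx⟩
      exact ⟨x, ⟨S, hS, T, hT, hadm, hx⟩, le_rfl⟩
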